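/- arXiv:1905.05886 — 2 statements merged into one kernel-verified Lean document; each statement's English description precedes it below -/
import Mathlib

section
/- Let A be a skew left brace and suppose A = B + C, where B and C are (not necessarily strong) left ideals of A that are trivial as skew left braces. Then the ideal A^(2) = A*A of A is meta-trivial, i.e., the skew left brace A^(2) is such that (A^(2))*(A^(2)) is trivial as a skew left brace; consequently A has a meta-trivial ideal I (namely I = A^(2)) such that A/I is a trivial skew left brace. -/
/-- A skew left brace: `(A,+)` and `(A,∘)` are groups (sharing the same identity `0`)
such that `a ∘ (b + c) = a ∘ b - a + a ∘ c`.  Here `circ` is the operation `∘` and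
`cinv a` is the inverse of `a` in `(A,∘)`. -/
class SkewBrace (A : Type*) extends AddGroup A where
  circ : A → A → A
  cinv : A → A
  circ_assoc : ∀ a b c : A, circ (circ a b) c = circ a (circ b c)
  zero_circ : ∀ a : A, circ 0 a = a
  circ_zero : ∀ a : A, circ a 0 = a
  cinv_circ : ∀ a : A, circ (cinv a) a = 0
  circ_cinv : ∀ a : A, circ a (cinv a) = 0
  compat : ∀ a b c : A, circ a (b + c) = circ a b + -a + circ a c

open SkewBrace

/-- `lam a b = -a + a ∘ b`. -/
def lam {A : Type*} [SkewBrace A] (a b : A) : A := -a + circ a b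

/-- The star operation `a * b = lam a b - b = -a + a ∘ b - b`. -/
def bstar {A : Type*} [SkewBrace A] (a b : A) : A := lam a b - b

/-- `X * Y`: the subgroup of `(A,+)` generated by `{x * y : x ∈ X, y ∈ Y}`. -/
def starSpan {A : Type*} [SkewBrace A] (X Y : Set A) : AddSubgroup A :=
  AddSubgroup.closure {z | ∃ x ∈ X, ∃ y ∈ Y, z = bstar x y}

/-- The right series of `st`: `rseriesOf st 0 = A = A^(1)` and
`rseriesOf st n = A^(n+1)`, so that `A^(n+1) = A^(n) * A`. -/
def rseriesOf {G : Type*} [AddGroup G] (st : G → G → G) : ℕ → AddSubgroup G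
  | 0 => ⊤
  | n + 1 => AddSubgroup.closure {z | ∃ u ∈ rseriesOf st n, ∃ a : G, z = st u a}

section helpers
variable {A : Type*} [SkewBrace A]

theorem circ_eq (a b : A) : circ a b = a + lam a b := by simp [lam]

theorem lam_add (a b c : A) : lam a (b + c) = lam a b + lam a c := by
  simp [lam, compat, add_assoc]

theorem lam_zero (a : A) : lam a 0 = 0 := by simp [lam, circ_zero]

theorem zero_lam (a : A) : lam 0 a = a := by simp [lam, zero_circ]

theorem lam_neg (a b : A) : lam a (-b) = -lam a b := by
  apply eq_neg_of_add_eq_zero_left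
  rw [← lam_add]; simp [lam_zero]

theorem lam_sub (a b c : A) : lam a (b - c) = lam a b - lam a c := by
  rw [sub_eq_add_neg, lam_add, lam_neg, sub_eq_add_neg]

theorem lam_circ (a b c : A) : lam (circ a b) c = lam a (lam b c) := by
  have h : circ (circ a b) c = circ a (circ b c) := circ_assoc a b c
  rw [circ_eq (circ a b), circ_eq a (circ b c), circ_eq b c, lam_add, circ_eq a b, add_assoc] at h
  have h' := add_left_cancel (add_left_cancel h)
  rwa [← circ_eq a b] at h'

theorem lam_cinv (a b : A) : lam a (lam (cinv a) b) = b := by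
  rw [← lam_circ, circ_cinv, zero_lam]

theorem cinv_lam (a b : A) : lam (cinv a) (lam a b) = b := by
  rw [← lam_circ, cinv_circ, zero_lam]

theorem add_eq_circ (a b : A) : a + b = circ a (lam (cinv a) b) := by
  rw [circ_eq, lam_cinv]

theorem lam_cinv_self (a : A) : lam a (cinv a) = -a := by
  simp [lam, circ_cinv]

/-- The kernel of `lam` as an additive subgroup. -/
def kerLam (A : Type*) [SkewBrace A] : AddSubgroup A where
  carrier := {k | ∀ a, lam k a = a}
  zero_mem' := zero_lam
  add_mem' := by
    intro k l hk hl a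
    have : k + l = circ k l := by rw [circ_eq, hk]
    rw [this, lam_circ, hl, hk]
  neg_mem' := by
    intro k hk a
    have h1 : cinv k = -k := by
      have := lam_cinv_self k
      rwa [hk] at this
    have h2 := cinv_lam k a
    rw [hk, h1] at h2
    exact h2

theorem mem_kerLam {k : A} : k ∈ kerLam A ↔ ∀ a, lam k a = a := Iff.rfl

theorem bstar_conj (u w v : A) : w + bstar u v - w = -bstar u w + bstar u (w + v) := by
  simp [bstar, lam_add, sub_eq_add_neg, add_assoc]

theorem bstar_add (u w v : A) : bstar u (w + v) = bstar u w + (w + bstar u v - w) := by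
  rw [bstar_conj]; simp

theorem bstar_mem_starSpan {X Y : Set A} {x y : A} (hx : x ∈ X) (hy : y ∈ Y) :
    bstar x y ∈ starSpan X Y := AddSubgroup.subset_closure ⟨x, hx, y, hy, rfl⟩

/-- To be closed under conjugation it is enough to look at generators. -/
theorem starSpan_conj {X Y : Set A} (a : A)
    (h : ∀ x ∈ X, ∀ y ∈ Y, a + bstar x y - a ∈ starSpan X Y) :
    ∀ z ∈ starSpan X Y, a + z - a ∈ starSpan X Y := by
  intro z hz
  induction hz using AddSubgroup.closure_induction with
  | mem z hz => obtain ⟨x, hx, y, hy, rfl⟩ := hz; exact h x hx y hy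
  | zero => simp [zero_mem]
  | add y z _ _ hy hz =>
    have : a + (y + z) - a = (a + y - a) + (a + z - a) := by simp [sub_eq_add_neg, add_assoc]
    rw [this]; exact add_mem hy hz
  | neg y _ hy =>
    have : a + -y - a = -(a + y - a) := by simp [sub_eq_add_neg, add_assoc]
    rw [this]; exact neg_mem hy

theorem sq_conj (a : A) : ∀ z ∈ starSpan (Set.univ : Set A) Set.univ,
    a + z - a ∈ starSpan (Set.univ : Set A) Set.univ := by
  apply starSpan_conj
  intro x _ y _
  rw [bstar_conj]
  exact add_mem (neg_mem (bstar_mem_starSpan trivial trivial)) (bstar_mem_starSpan trivial trivial)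

theorem sq_lam (a : A) : ∀ z ∈ starSpan (Set.univ : Set A) Set.univ,
    lam a z ∈ starSpan (Set.univ : Set A) Set.univ := by
  intro z hz
  induction hz using AddSubgroup.closure_induction with
  | mem z hz =>
    obtain ⟨x, _, y, _, rfl⟩ := hz
    have : lam a (bstar x y) = bstar (circ (circ a x) (cinv a)) (lam a y) := by
      simp only [bstar, lam_sub, lam_circ, cinv_lam]
    rw [this]; exact bstar_mem_starSpan trivial trivial
  | zero => rw [lam_zero]; exact zero_mem _
  | add y z _ _ hy hz => rw [lam_add]; exact add_mem hy hz
  | neg y _ hy => rw [lam_neg]; exact neg_mem hy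

/-- The hypotheses of the theorem. -/
structure Fac (B C : AddSubgroup A) : Prop where
  hB : ∀ a : A, ∀ x ∈ B, lam a x ∈ B
  hC : ∀ a : A, ∀ x ∈ C, lam a x ∈ C
  tB : ∀ x ∈ B, ∀ y ∈ B, lam x y = y
  tC : ∀ x ∈ C, ∀ y ∈ C, lam x y = y
  fact : ∀ a : A, ∃ b ∈ B, ∃ c ∈ C, a = b + c

variable {B C : AddSubgroup A}

theorem Fac.symm (h : Fac B C) : Fac C B where
  hB := h.hC
  hC := h.hB
  tB := h.tC
  tC := h.tB
  fact a := by
    obtain ⟨b, hb, c, hc, e⟩ := h.fact (-a)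
    exact ⟨-c, neg_mem hc, -b, neg_mem hb, by rw [← neg_neg a, e]; simp⟩

/-- `lam (c + b)` acts on `B` as `lam c`. -/
theorem Fac.lam_cb (h : Fac B C) {b b0 : A} (c : A) (hb : b ∈ B) (hb0 : b0 ∈ B) :
    lam (c + b) b0 = lam c b0 := by
  rw [add_eq_circ, lam_circ, h.tB _ (h.hB _ _ hb) _ hb0]

/-- `lam (b + c)` acts on `B` as `lam (lam (cinv b) c)`. -/
theorem Fac.lam_bc (h : Fac B C) {b b0 : A} (c : A) (hb : b ∈ B) (hb0 : b0 ∈ B) :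
    lam (b + c) b0 = lam (lam (cinv b) c) b0 := by
  rw [add_eq_circ, lam_circ, h.tB _ hb _ (h.hB _ _ hb0)]

theorem Fac.norm (h : Fac B C) (a : A) : ∀ z ∈ starSpan (B : Set A) (C : Set A),
    a + z - a ∈ starSpan (B : Set A) (C : Set A) := by
  have h1 : ∀ b ∈ B, ∀ z ∈ starSpan (B : Set A) (C : Set A),
      b + z - b ∈ starSpan (B : Set A) (C : Set A) := by
    intro b hb
    apply starSpan_conj
    intro b' hb' c hc
    obtain ⟨b2, hb2, c2, hc2, e⟩ := h.fact (-c + -b)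
    have e' : -lam b' c + -b = b2 + lam b' c2 := by
      have := congrArg (lam b') e
      rwa [lam_add, lam_add, lam_neg, h.tB _ hb' _ (neg_mem hb), h.tB _ hb' _ hb2] at this
    have : b + bstar b' c - b = bstar b' (-c2) := by
      calc b + bstar b' c - b = -(-lam b' c + -b) + (-c + -b) := by
            simp [bstar, sub_eq_add_neg, add_assoc]
        _ = bstar b' (-c2) := by
            rw [e, e']; simp [bstar, lam_neg, add_assoc]
    rw [this]
    exact bstar_mem_starSpan hb' (neg_mem hc2)
  have h2 : ∀ c ∈ C, ∀ z ∈ starSpan (B : Set A) (C : Set A),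
      c + z - c ∈ starSpan (B : Set A) (C : Set A) := by
    intro c hc
    apply starSpan_conj
    intro b' hb' c' hc'
    rw [bstar_conj]
    exact add_mem (neg_mem (bstar_mem_starSpan hb' hc))
      (bstar_mem_starSpan hb' (add_mem hc hc'))
  intro z hz
  obtain ⟨b, hb, c, hc, rfl⟩ := h.fact a
  have : b + c + z - (b + c) = b + (c + z - c) - b := by simp [sub_eq_add_neg, add_assoc]
  rw [this]
  exact h1 b hb _ (h2 c hc z hz)

theorem Fac.le (h : Fac B C) {y : A} (hy : y ∈ starSpan (B : Set A) (C : Set A)) : y ∈ C := by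
  have : starSpan (B : Set A) (C : Set A) ≤ C := by
    unfold starSpan
    rw [AddSubgroup.closure_le]
    rintro _ ⟨b, _, c, hc, rfl⟩
    exact sub_mem (h.hC _ _ hc) hc
  exact this hy

theorem Fac.bstar_mem (h : Fac B C) (a : A) {c : A} (hc : c ∈ C) :
    bstar a c ∈ starSpan (B : Set A) (C : Set A) := by
  obtain ⟨b, hb, c', hc', rfl⟩ := h.fact a
  have : bstar (b + c') c = bstar b c := by
    rw [bstar, h.symm.lam_cb _ hc' hc, bstar]
  rw [this]
  exact bstar_mem_starSpan hb hc

theorem Fac.decomp (h : Fac B C) {u : A} (hu : u ∈ starSpan (Set.univ : Set A) Set.univ) :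
    ∃ x ∈ starSpan (C : Set A) (B : Set A), ∃ y ∈ starSpan (B : Set A) (C : Set A),
      u = x + y := by
  induction hu using AddSubgroup.closure_induction with
  | mem z hz =>
    obtain ⟨a, _, w, _, rfl⟩ := hz
    obtain ⟨b, hb, c, hc, rfl⟩ := h.fact w
    exact ⟨_, h.symm.bstar_mem a hb, _, h.norm b _ (h.bstar_mem a hc), bstar_add _ _ _⟩
  | zero => exact ⟨0, zero_mem _, 0, zero_mem _, by simp⟩
  | add u v _ _ hu hv =>
    obtain ⟨x, hx, y, hy, rfl⟩ := hu
    obtain ⟨x', hx', y', hy', rfl⟩ := hv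
    refine ⟨x + x', add_mem hx hx', (-x' + y - -x') + y', add_mem (h.norm _ _ hy) hy', ?_⟩
    simp [add_assoc]
  | neg u _ hu =>
    obtain ⟨x, hx, y, hy, rfl⟩ := hu
    refine ⟨-x, neg_mem hx, x + -y - x, h.norm _ _ (neg_mem hy), ?_⟩
    simp [sub_eq_add_neg, add_assoc]

theorem Fac.ker_of (h : Fac B C) {k : A} (h1 : ∀ b ∈ B, lam k b = b) (h2 : ∀ c ∈ C, lam k c = c) :
    k ∈ kerLam A := by
  intro a
  obtain ⟨b, hb, c, hc, rfl⟩ := h.fact a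
  rw [lam_add, h1 b hb, h2 c hc]

/-- Commutators of the two normal pieces lie in `B ∩ C`. -/
theorem Fac.comm_mem (h : Fac B C) {x y : A} (hx : x ∈ starSpan (C : Set A) (B : Set A))
    (hy : y ∈ starSpan (B : Set A) (C : Set A)) :
    x + y - x - y ∈ B ∧ x + y - x - y ∈ C := by
  constructor
  · have : x + y - x - y = x + (y + -x - y) := by simp [sub_eq_add_neg, add_assoc]
    rw [this]
    exact add_mem (h.symm.le hx) (h.symm.le (h.symm.norm y _ (neg_mem hx)))
  · exact sub_mem (h.le (h.norm x _ hy)) (h.le hy)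

theorem Fac.comm_ker (h : Fac B C) {x y : A} (hx : x ∈ starSpan (C : Set A) (B : Set A))
    (hy : y ∈ starSpan (B : Set A) (C : Set A)) : x + y - x - y ∈ kerLam A :=
  h.ker_of (h.tB _ (h.comm_mem hx hy).1) (h.tC _ (h.comm_mem hx hy).2)

theorem Fac.key (h : Fac B C) {u y : A} (hu : u ∈ starSpan (Set.univ : Set A) Set.univ)
    (hy : y ∈ starSpan (B : Set A) (C : Set A)) : bstar u y ∈ kerLam A := by
  obtain ⟨x, hx, y', hy', rfl⟩ := h.decomp hu
  have hxB := h.symm.le hx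
  have hyC := h.le hy
  have e1 : bstar (x + y') y = lam x y - y := by
    rw [bstar, h.symm.lam_cb _ (h.le hy') hyC]
  rw [e1]
  have hcC : lam x y - y ∈ C := sub_mem (h.hC _ _ hyC) hyC
  refine h.ker_of ?_ (h.tC _ hcC)
  have hz := h.comm_ker (neg_mem hx) hy
  have hzC := (h.comm_mem (neg_mem hx) hy).2
  set z := -x + y - -x - y with hzdef
  have hxinv : cinv (-x) = x := by
    have := lam_cinv_self (-x)
    have h3 : cinv (-x) = lam (cinv (-x)) (- -x) := by
      rw [← this, cinv_lam]
    rw [h3, neg_neg]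
    have h4 := cinv_lam (-x) x
    rwa [h.tB _ (neg_mem hxB) _ hxB] at h4
  -- `lam (lam x y) = lam y` on `B`
  have hq : ∀ b ∈ B, lam (lam x y) b = lam y b := by
    intro b hb
    have e2 : -x + y = (z + y) + -x := by simp [hzdef, sub_eq_add_neg, add_assoc]
    have e3 := h.lam_bc y (neg_mem hxB) hb
    rw [hxinv, e2, h.lam_cb _ (neg_mem hxB) hb] at e3
    rw [← e3]
    have : z + y = circ z y := by rw [circ_eq, hz]
    rw [this, lam_circ, hz]
  intro b hb
  have e4 : circ (lam x y - y) y = lam x y := by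
    rw [circ_eq, h.tC _ hcC _ hyC]; simp
  have e5 := hq _ (h.hB (cinv y) _ hb)
  rwa [← e4, lam_circ, lam_cinv] at e5

theorem Fac.sq_sq (h : Fac B C) {u v : A} (hu : u ∈ starSpan (Set.univ : Set A) Set.univ)
    (hv : v ∈ starSpan (Set.univ : Set A) Set.univ) : bstar u v ∈ kerLam A := by
  obtain ⟨x, hx, y, hy, rfl⟩ := h.decomp hv
  rw [bstar_add]
  refine add_mem (h.symm.key hu hx) ?_
  have h1 := h.comm_ker hx (h.bstar_mem u (h.le hy))
  have := add_mem h1 (h.key hu hy)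
  simpa using this

end helpers

/-- if `A = B + C` through (not necessarily strong) left ideals which are
trivial as skew braces, then `A^(2) = A*A` is an ideal of `A` which is meta-trivial
(`A^(2) * A^(2)` is trivial as a skew brace), and the quotient `A/A^(2)` is trivial
(i.e. `-(a+b) + a∘b ∈ A^(2)` for all `a,b`). -/
theorem stmt10 {A : Type*} [SkewBrace A] (B C : AddSubgroup A)
    (hB : ∀ a : A, ∀ x ∈ B, lam a x ∈ B)
    (hC : ∀ a : A, ∀ x ∈ C, lam a x ∈ C)
    (hBtriv : ∀ x ∈ B, ∀ y ∈ B, x + y = circ x y)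
    (hCtriv : ∀ x ∈ C, ∀ y ∈ C, x + y = circ x y)
    (hfact : ∀ a : A, ∃ b ∈ B, ∃ c ∈ C, a = b + c) :
    (∀ a : A, ∀ x ∈ starSpan (Set.univ : Set A) (Set.univ : Set A),
       lam a x ∈ starSpan (Set.univ : Set A) (Set.univ : Set A)) ∧
    (starSpan (Set.univ : Set A) (Set.univ : Set A)).Normal ∧
    (∀ a : A, ∀ x ∈ starSpan (Set.univ : Set A) (Set.univ : Set A),
       circ (circ a x) (cinv a) ∈ starSpan (Set.univ : Set A) (Set.univ : Set A)) ∧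
    (∀ x ∈ starSpan ((starSpan (Set.univ : Set A) (Set.univ : Set A) : AddSubgroup A) : Set A)
             ((starSpan (Set.univ : Set A) (Set.univ : Set A) : AddSubgroup A) : Set A),
     ∀ y ∈ starSpan ((starSpan (Set.univ : Set A) (Set.univ : Set A) : AddSubgroup A) : Set A)
             ((starSpan (Set.univ : Set A) (Set.univ : Set A) : AddSubgroup A) : Set A),
       x + y = circ x y) ∧
    (∀ a b : A, -(a + b) + circ a b ∈ starSpan (Set.univ : Set A) (Set.univ : Set A)) := by

  have h : Fac B C := by
    refine ⟨hB, hC, ?_, ?_, hfact⟩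
    · intro x hx y hy; simp [lam, ← hBtriv x hx y hy]
    · intro x hx y hy; simp [lam, ← hCtriv x hx y hy]
  refine ⟨sq_lam, ⟨fun n hn g => ?_⟩, ?_, ?_, ?_⟩
  · rw [← sub_eq_add_neg]; exact sq_conj g n hn
  · intro a x hx
    have e : circ (circ a x) (cinv a) = a + lam a (x + bstar x (cinv a)) - a := by
      rw [circ_eq, lam_circ, circ_eq, bstar, lam_add, lam_sub, lam_cinv_self]
      simp [sub_eq_add_neg, add_assoc]
    rw [e]
    exact sq_conj _ _ (sq_lam _ _ (add_mem hx (bstar_mem_starSpan trivial trivial)))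
  · intro x hx y _
    have hle : starSpan ((starSpan (Set.univ : Set A) (Set.univ : Set A) : AddSubgroup A) : Set A)
        ((starSpan (Set.univ : Set A) (Set.univ : Set A) : AddSubgroup A) : Set A)
          ≤ kerLam A := by
      rw [starSpan, AddSubgroup.closure_le]
      rintro _ ⟨u, hu, v, hv, rfl⟩
      exact h.sq_sq hu hv
    rw [circ_eq, hle hx y]
  · intro a b
    have e : -(a + b) + circ a b = -b + bstar a b - -b := by
      rw [circ_eq, bstar]; simp [add_assoc]
    rw [e]
    exact sq_conj _ _ (bstar_mem_starSpan trivial trivial)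
end

section
/- Let A be a left brace (a skew left brace whose additive group (A,+) is abelian). If A = B + C is a factorization through left ideals B and C, where both are trivial as skew left braces, then Soc(A) = Ker λ is a factorized ideal of A, i.e., Ker λ = (Ker λ ∩ B) + (Ker λ ∩ C). -/
open SkewBrace

theorem aux_lam_add {A : Type*} [SkewBrace A] (a x y : A) :
    lam a (x + y) = lam a x + lam a y := by
  simp [lam, compat, add_assoc]

theorem aux_circ_neg {A : Type*} [SkewBrace A] (a b : A) :
    circ a (-b) = a + -circ a b + a := by
  have h := compat a b (-b)
  rw [add_neg_cancel, circ_zero] at h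
  have h2 : circ a (-b) = -(circ a b + -a) + a := by
    rw [eq_neg_add_iff_add_eq]; exact h.symm
  rw [h2]; simp

theorem aux_lam_circ {A : Type*} [SkewBrace A] (a b x : A) :
    lam (circ a b) x = lam a (lam b x) := by
  simp [lam, compat, aux_circ_neg, circ_assoc, add_assoc]

theorem aux_circ_eq {A : Type*} [SkewBrace A] (a b : A) : circ a b = a + lam a b := by
  simp [lam]

theorem aux_lam_zero {A : Type*} [SkewBrace A] (b : A) : lam 0 b = b := by
  simp [lam, zero_circ]

/-- if `A` is a left brace (additive group abelian) and `A = B + C` through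
left ideals trivial as skew braces, then `Soc(A) = Ker lam` is factorized:
`Ker lam = (Ker lam ∩ B) + (Ker lam ∩ C)`. -/
theorem stmt14 {A : Type*} [SkewBrace A]
    (hcomm : ∀ a b : A, a + b = b + a)
    (B C : AddSubgroup A)
    (hB : ∀ a : A, ∀ x ∈ B, lam a x ∈ B)
    (hC : ∀ a : A, ∀ x ∈ C, lam a x ∈ C)
    (hBtriv : ∀ x ∈ B, ∀ y ∈ B, x + y = circ x y)
    (hCtriv : ∀ x ∈ C, ∀ y ∈ C, x + y = circ x y)
    (hfact : ∀ a : A, ∃ b ∈ B, ∃ c ∈ C, a = b + c) :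
    {a : A | ∀ x : A, lam a x = x} =
      {t : A | ∃ u ∈ {a : A | ∀ x : A, lam a x = x} ∩ (B : Set A),
               ∃ v ∈ {a : A | ∀ x : A, lam a x = x} ∩ (C : Set A), t = u + v} := by
  ext a
  simp only [Set.mem_setOf_eq, Set.mem_inter_iff, SetLike.mem_coe]
  constructor
  · intro ha
    obtain ⟨b, hb, c, hc, rfl⟩ := hfact a
    have hlam : lam b (lam (cinv b) c) = c := by
      rw [← aux_lam_circ, circ_cinv, aux_lam_zero]
    have hc1 : lam (cinv b) c ∈ C := hC _ _ hc
    have hsum : b + c = circ b (lam (cinv b) c) := by rw [aux_circ_eq, hlam]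
    have hbk : ∀ x, lam b x = x := by
      intro x
      obtain ⟨y, hy, z, hz, rfl⟩ := hfact x
      have h1 : lam b y = y := by
        simp [lam, ← hBtriv b hb y hy]
      have h2 : lam (lam (cinv b) c) z = z := by
        rw [lam, ← hCtriv _ hc1 z hz, neg_add_cancel_left]
      have h3 := ha z
      rw [hsum, aux_lam_circ, h2] at h3
      rw [aux_lam_add, h1, h3]
    have hck : ∀ x, lam c x = x := by
      intro x
      have h3 := ha x
      rw [hbk] at hlam
      rw [hsum, aux_lam_circ, hlam, hbk] at h3
      exact h3
    exact ⟨b, ⟨hbk, hb⟩, c, ⟨hck, hc⟩, rfl⟩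
  · rintro ⟨u, ⟨hu, -⟩, v, ⟨hv, -⟩, rfl⟩ x
    have h : u + v = circ u v := by rw [aux_circ_eq, hu]
    rw [h, aux_lam_circ, hv, hu]
end
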